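/- Let 2 ≤ r ≤ 8 and let β ∈ ℤ^{1+r} satisfy: β·l ≥ 0 for every line class l (β is nef), β·β > 0 (β is big), and p_a(β) = 0. Then there exists a line class l with β·l = 0 and (β+K)·l = −1. -/

import Mathlib

/-!
If no line is orthogonal to `β`, nefness forces `1 ≤ β·l` for every line `l`, i.e. `β + K` is nef
too. Then `β·(β+K) ≥ 0`, because both factors are nef, whereas `p_a(β) = 0` makes it negative.

The inequality `β·(β+K) ≥ 0` is proved by Weyl-group descent
(`inter_add_Kcl_nonneg`): the reflection in a root `h - e_i - e_j - e_k` permutes the lines and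
fixes `K`, and it lowers the degree `d` of `β` whenever `d < a_i + a_j + a_k`. Since `d ≥ 0`
throughout, one may assume that `d ≥ a_i + a_j + a_k` for all distinct `i, j, k`.
For such a class the bound is elementary (`inter_add_Kcl_nonneg_of_reduced`): comparing all
multiplicities with the three largest ones, it reduces to an inequality in four integers, where
`r ≤ 8` bounds the number of remaining multiplicities.
-/

/-- Intersection pairing on the Picard lattice of `S_r`, with classes written in
`(d; a_1, …, a_r)` coordinates (the class `d·h − ∑ a_i·e_i`):
`(d; a)·(d'; a') = d·d' − ∑ a_i·a_i'`. -/
def inter {r : ℕ} (x y : ℤ × (Fin r → ℤ)) : ℤ :=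
  x.1 * y.1 - ∑ i, x.2 i * y.2 i

/-- The canonical class `K = (−3; −1, …, −1)` of `S_r`. -/
def Kcl (r : ℕ) : ℤ × (Fin r → ℤ) := (-3, fun _ => -1)

/-- A line class: `l·l = −1` and `(−K)·l = 1`. -/
def IsLine {r : ℕ} (l : ℤ × (Fin r → ℤ)) : Prop :=
  inter l l = -1 ∧ inter (-(Kcl r)) l = 1

/-- A conic class: `C·C = 0` and `(−K)·C = 2`. -/
def IsConic {r : ℕ} (C : ℤ × (Fin r → ℤ)) : Prop :=
  inter C C = 0 ∧ inter (-(Kcl r)) C = 2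

/-- Arithmetic genus `p_a(β) = β·(β+K)/2 + 1`. -/
def pa {r : ℕ} (β : ℤ × (Fin r → ℤ)) : ℤ :=
  inter β (β + Kcl r) / 2 + 1

section Bilinear

variable {r : ℕ}

lemma inter_comm' (x y : ℤ × (Fin r → ℤ)) : inter x y = inter y x := by
  simp [inter, mul_comm]

lemma inter_add_left (x y z : ℤ × (Fin r → ℤ)) :
    inter (x + y) z = inter x z + inter y z := by
  simp only [inter, Prod.fst_add, Prod.snd_add, Pi.add_apply, add_mul, Finset.sum_add_distrib]
  ring

lemma inter_smul_left (c : ℤ) (x z : ℤ × (Fin r → ℤ)) :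
    inter (c • x) z = c * inter x z := by
  simp only [inter, Prod.smul_fst, Prod.smul_snd, Pi.smul_apply, smul_eq_mul, mul_assoc,
    ← Finset.mul_sum]
  ring

lemma inter_add_right (x y z : ℤ × (Fin r → ℤ)) :
    inter x (y + z) = inter x y + inter x z := by
  rw [inter_comm', inter_add_left, inter_comm' y, inter_comm' z]

lemma inter_smul_right (c : ℤ) (x z : ℤ × (Fin r → ℤ)) :
    inter x (c • z) = c * inter x z := by
  rw [inter_comm', inter_smul_left, inter_comm' z]

lemma inter_neg_left (x z : ℤ × (Fin r → ℤ)) : inter (-x) z = -inter x z := by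
  simp only [inter, Prod.fst_neg, Prod.snd_neg, Pi.neg_apply, neg_mul, Finset.sum_neg_distrib]
  ring

/-- The class `h - e_i - e_j - e_k`, a root when `i, j, k` are distinct. -/
def rootCl (i j k : Fin r) : ℤ × (Fin r → ℤ) :=
  (1, Pi.single i 1 + Pi.single j 1 + Pi.single k 1)

/-- The exceptional class `e_i`; its multiplicity vector is `-1` at `i` by the sign convention
`(d; a) = d·h - ∑ a_i·e_i`. -/
def excCl (i : Fin r) : ℤ × (Fin r → ℤ) := (0, -Pi.single i 1)

/-- The class `h - e_i - e_j` of the line through two of the blown-up points. -/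
def chordCl (i j : Fin r) : ℤ × (Fin r → ℤ) := (1, Pi.single i 1 + Pi.single j 1)

/-- The map `x ↦ x + (x·α)·α`, the reflection in `α` when `α·α = -2`. -/
def refl' (α x : ℤ × (Fin r → ℤ)) : ℤ × (Fin r → ℤ) := x + inter x α • α

lemma inter_rootCl (x : ℤ × (Fin r → ℤ)) (i j k : Fin r) :
    inter x (rootCl i j k) = x.1 - (x.2 i + x.2 j + x.2 k) := by
  simp [inter, rootCl, mul_add, Finset.sum_add_distrib, Pi.single_apply]

lemma inter_excCl (x : ℤ × (Fin r → ℤ)) (i : Fin r) : inter x (excCl i) = x.2 i := by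
  simp [inter, excCl, Pi.single_apply]

lemma inter_chordCl (x : ℤ × (Fin r → ℤ)) (i j : Fin r) :
    inter x (chordCl i j) = x.1 - (x.2 i + x.2 j) := by
  simp [inter, chordCl, mul_add, Finset.sum_add_distrib, Pi.single_apply]

lemma isLine_excCl (i : Fin r) : IsLine (excCl i) := by
  constructor
  · rw [inter_excCl]; simp [excCl]
  · rw [inter_excCl]; simp [Kcl]

lemma isLine_chordCl {i j : Fin r} (h : i ≠ j) : IsLine (chordCl i j) := by
  constructor
  · rw [inter_chordCl]; simp [chordCl, h, h.symm]
  · rw [inter_chordCl]; simp [Kcl]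

lemma inter_refl'_left (α x y : ℤ × (Fin r → ℤ)) :
    inter (refl' α x) y = inter x (refl' α y) := by
  simp only [refl', inter_add_left, inter_add_right, inter_smul_left, inter_smul_right]
  rw [inter_comm' α y]
  ring

lemma inter_refl'_refl' {α : ℤ × (Fin r → ℤ)} (hα : inter α α = -2) (x y : ℤ × (Fin r → ℤ)) :
    inter (refl' α x) (refl' α y) = inter x y := by
  simp only [refl', inter_add_left, inter_add_right, inter_smul_left, inter_smul_right, hα]
  rw [inter_comm' α y]
  ring

lemma isLine_refl' {α l : ℤ × (Fin r → ℤ)} (hα : inter α α = -2) (hK : inter (Kcl r) α = 0)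
    (hl : IsLine l) : IsLine (refl' α l) := by
  refine ⟨by rw [inter_refl'_refl' hα]; exact hl.1, ?_⟩
  have := hl.2
  rw [inter_neg_left] at this ⊢
  rw [← inter_refl'_left, refl', hK, zero_smul, add_zero]
  exact this

lemma inter_add_Kcl (x : ℤ × (Fin r → ℤ)) :
    inter x (x + Kcl r) = x.1 * (x.1 - 3) - ∑ i, x.2 i * (x.2 i - 1) := by
  simp [inter, Kcl, sub_eq_add_neg]

end Bilinear

lemma reduced_numeric {d x y c : ℤ} (hc : 1 ≤ c) (hx : c ≤ x) (hy : c ≤ y)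
    (hd : x + y + c ≤ d) :
    x * (x - 1) + (y * (y - 1) + 6 * (c * (c - 1))) ≤ d * (d - 3) := by
  -- `t ↦ t (t - 3)` is increasing for `t ≥ 3`, so `d` may be replaced by `x + y + c`;
  -- the rest is a sum of products of the nonnegative quantities `x - c`, `y - c`, `c - 1`.
  have h1 : 0 ≤ (d - (x + y + c)) * (d + (x + y + c) - 3) :=
    mul_nonneg (by linarith) (by linarith)
  have h2 : 0 ≤ (x - c) * (y - c) := mul_nonneg (by linarith) (by linarith)
  have h3 : 0 ≤ (2 * c - 1) * (x - c + (y - c)) := mul_nonneg (by linarith) (by linarith)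
  have h4 : 0 ≤ c * (c - 1) := mul_nonneg (by linarith) (by linarith)
  nlinarith

/-- The inequality `β·(β+K) ≥ 0` for a class `β = (d; a)` in the fundamental chamber which is
strictly positive on the lines `e_i` and `h - e_i - e_j`. -/
lemma inter_add_Kcl_nonneg_of_reduced {r : ℕ} (hr1 : 2 ≤ r) (hr : r ≤ 8)
    (β : ℤ × (Fin r → ℤ)) (h1 : ∀ i, 1 ≤ β.2 i)
    (h2 : ∀ i j, i ≠ j → β.2 i + β.2 j + 1 ≤ β.1)
    (h3 : ∀ i j k, i ≠ j → i ≠ k → j ≠ k → β.2 i + β.2 j + β.2 k ≤ β.1) :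
    0 ≤ inter β (β + Kcl r) := by
  rw [inter_add_Kcl]
  obtain ⟨p, -, hp⟩ := Finset.exists_max_image (Finset.univ : Finset (Fin r)) β.2
    ⟨⟨0, by omega⟩, Finset.mem_univ _⟩
  have hcp : (Finset.univ.erase p).card = r - 1 := by simp
  obtain ⟨q, hqm, hq⟩ := Finset.exists_max_image (Finset.univ.erase p) β.2
    (Finset.card_pos.1 (by omega))
  have hqp : q ≠ p := Finset.ne_of_mem_erase hqm
  set S := (Finset.univ.erase p).erase q with hS
  have hcS : S.card = r - 2 := by rw [hS, Finset.card_erase_of_mem hqm, hcp]; omega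
  -- `c` is the third largest multiplicity, or `1` when `r = 2`.
  obtain ⟨c, hc1, hcq, hcd, hcS'⟩ : ∃ c : ℤ, 1 ≤ c ∧ c ≤ β.2 q ∧ β.2 p + β.2 q + c ≤ β.1 ∧
      ∀ i ∈ S, β.2 i ≤ c := by
    rcases S.eq_empty_or_nonempty with h | h
    · exact ⟨1, le_rfl, h1 q, h2 p q hqp.symm, by simp [h]⟩
    · obtain ⟨s, hs, hmax⟩ := Finset.exists_max_image S β.2 h
      have hs' := hs
      simp only [hS, Finset.mem_erase, Finset.mem_univ, and_true] at hs'
      exact ⟨β.2 s, h1 s, hq s (Finset.mem_of_mem_erase hs),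
        h3 p q s hqp.symm hs'.2.symm hs'.1.symm, hmax⟩
  have hsum : ∑ i ∈ S, β.2 i * (β.2 i - 1) ≤ 6 * (c * (c - 1)) := by
    have hc0 : 0 ≤ c * (c - 1) := mul_nonneg (by linarith) (by linarith)
    calc ∑ i ∈ S, β.2 i * (β.2 i - 1) ≤ S.card • (c * (c - 1)) := by
          refine Finset.sum_le_card_nsmul _ _ _ fun i hi => ?_
          have := hcS' i hi
          have := h1 i
          exact mul_le_mul (by linarith) (by linarith) (by linarith) (by linarith)
      _ = (S.card : ℤ) * (c * (c - 1)) := by simp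
      _ ≤ 6 * (c * (c - 1)) := by
          refine mul_le_mul_of_nonneg_right ?_ hc0
          have : S.card ≤ 6 := by omega
          exact_mod_cast this
  rw [← Finset.add_sum_erase _ _ (Finset.mem_univ p), ← Finset.add_sum_erase _ _ hqm]
  have := reduced_numeric hc1 (hcq.trans (hp q (Finset.mem_univ _))) hcq hcd
  linarith

/-- A class positive on all lines satisfies `β·(β+K) ≥ 0`. The induction is on the degree of `β`,
which the reflection in a root negative on `β` strictly lowers. -/
lemma inter_add_Kcl_nonneg {r : ℕ} (hr1 : 2 ≤ r) (hr : r ≤ 8) (n : ℕ) :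
    ∀ β : ℤ × (Fin r → ℤ), β.1 ≤ n → (∀ l, IsLine l → 1 ≤ inter β l) →
      0 ≤ inter β (β + Kcl r) := by
  induction n with
  | zero =>
    intro β hd hβ
    -- Positivity on `e_0`, `e_1` and `h - e_0 - e_1` already gives degree at least `3`.
    have hne : (⟨0, by omega⟩ : Fin r) ≠ ⟨1, by omega⟩ := by simp
    have a := hβ _ (isLine_excCl ⟨0, by omega⟩)
    have b := hβ _ (isLine_excCl ⟨1, by omega⟩)
    have c := hβ _ (isLine_chordCl hne)
    rw [inter_excCl] at a b
    rw [inter_chordCl] at c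
    push_cast at hd
    linarith
  | succ n ih =>
    intro β hd hβ
    by_cases h3 : ∀ i j k, i ≠ j → i ≠ k → j ≠ k → β.2 i + β.2 j + β.2 k ≤ β.1
    · refine inter_add_Kcl_nonneg_of_reduced hr1 hr β (fun i => ?_) (fun i j hij => ?_) h3
      · have := hβ _ (isLine_excCl i)
        rwa [inter_excCl] at this
      · have := hβ _ (isLine_chordCl hij)
        rw [inter_chordCl] at this
        linarith
    · push Not at h3
      obtain ⟨i, j, k, hij, hik, hjk, hlt⟩ := h3
      have hα : inter (rootCl i j k) (rootCl i j k) = -2 := by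
        rw [inter_rootCl]
        simp [rootCl, hij, hik, hjk, hij.symm, hik.symm, hjk.symm]
      have hK : inter (Kcl r) (rootCl i j k) = 0 := by
        rw [inter_rootCl]; simp [Kcl]
      have key := ih (refl' (rootCl i j k) β) ?_ ?_
      · have hKr : refl' (rootCl i j k) (Kcl r) = Kcl r := by simp [refl', hK]
        rw [inter_add_right, inter_refl'_refl' hα, inter_refl'_left, hKr] at key
        rwa [inter_add_right]
      · have : (refl' (rootCl i j k) β).1 = β.1 + (β.1 - (β.2 i + β.2 j + β.2 k)) := by
          simp only [refl', inter_rootCl]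
          simp [rootCl]
        rw [this]
        push_cast at hd
        linarith
      · intro l hl
        rw [inter_refl'_left]
        exact hβ _ (isLine_refl' hα hK hl)

/-- for `2 ≤ r ≤ 8`, a nef and big class of arithmetic genus `0`
is orthogonal to some line class `l`, which moreover satisfies `(β+K)·l = −1`. -/
theorem genus_zero_nef_big_has_orthogonal_line (r : ℕ) (hr1 : 2 ≤ r) (hr : r ≤ 8)
    (β : ℤ × (Fin r → ℤ))
    (hnef : ∀ l : ℤ × (Fin r → ℤ), IsLine l → 0 ≤ inter β l)
    (hbig : 0 < inter β β) (hpa : pa β = 0) :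
    ∃ l : ℤ × (Fin r → ℤ), IsLine l ∧ inter β l = 0 ∧ inter (β + Kcl r) l = -1 := by
  by_contra hno
  have hpos : ∀ l, IsLine l → 1 ≤ inter β l := by
    intro l hl
    refine (hnef l hl).lt_of_ne fun h0 => hno ⟨l, hl, h0.symm, ?_⟩
    have := hl.2
    rw [inter_neg_left] at this
    rw [inter_add_left]
    linarith
  have := inter_add_Kcl_nonneg hr1 hr β.1.toNat β (Int.self_le_toNat _) hpos
  unfold pa at hpa
  omega
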